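/- arXiv:1511.08824 — 2 statements merged into one kernel-verified Lean document; each statement's English description precedes it below -/
import Mathlib

section
/- Let ε > 0 and let η, v : ℝ × ℝ → ℝ (time × space) be C^∞ functions with 1 + ε·η(t,x) > 0 for all (t,x), satisfying ∂_t η + ∂_x v = 0 and ∂_t v + (1+εη)∂_x η − ε(1+εη)∂_x³η + ε ∂_x( v²/(1+εη) ) = 0 for all (t,x). Then for all (t,x): (1/(1+εη))·∂_t²v − ∂_x²v + ε ∂_x⁴v + (2εv/(1+εη))·∂_x( ∂_t v/(1+εη) ) = g, where g = −(ε ∂_tη/(1+εη))·(∂_xη − ε ∂_x³η) − 2ε (∂_xv)(∂_tv)/(1+εη)² + (ε²/(1+εη))·∂_x( v²·∂_tη/(1+εη)² ). -/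
/-- Partial derivative in the first (time) variable of `f : ℝ → ℝ → ℝ`. -/
noncomputable def dt1 (f : ℝ → ℝ → ℝ) : ℝ → ℝ → ℝ := fun t x => deriv (fun s => f s x) t

/-- Partial derivative in the second (space) variable of `f : ℝ → ℝ → ℝ`. -/
noncomputable def dx1 (f : ℝ → ℝ → ℝ) : ℝ → ℝ → ℝ := fun t x => deriv (fun y => f t y) x

/-- Joint smoothness of a function of two real variables. -/
def Sm (f : ℝ → ℝ → ℝ) : Prop := ContDiff ℝ (⊤ : ℕ∞) fun p : ℝ × ℝ => f p.1 p.2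

theorem Sm.dt_hasF {f : ℝ → ℝ → ℝ} (hf : Sm f) (t x : ℝ) :
    HasDerivAt (fun s => f s x) (fderiv ℝ (fun p : ℝ × ℝ => f p.1 p.2) (t, x) (1, 0)) t := by
  have h : DifferentiableAt ℝ (fun p : ℝ × ℝ => f p.1 p.2) (t, x) :=
    (ContDiff.differentiable hf (by simp)) _
  have h2 : HasDerivAt (fun s : ℝ => (s, x)) ((1 : ℝ), (0 : ℝ)) t :=
    (hasDerivAt_id t).prodMk (hasDerivAt_const t x)
  exact HasFDerivAt.comp_hasDerivAt t h.hasFDerivAt h2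

theorem Sm.dx_hasF {f : ℝ → ℝ → ℝ} (hf : Sm f) (t x : ℝ) :
    HasDerivAt (fun y => f t y) (fderiv ℝ (fun p : ℝ × ℝ => f p.1 p.2) (t, x) (0, 1)) x := by
  have h : DifferentiableAt ℝ (fun p : ℝ × ℝ => f p.1 p.2) (t, x) :=
    (ContDiff.differentiable hf (by simp)) _
  have h2 : HasDerivAt (fun y : ℝ => (t, y)) ((0 : ℝ), (1 : ℝ)) x :=
    (hasDerivAt_const x t).prodMk (hasDerivAt_id x)
  exact HasFDerivAt.comp_hasDerivAt x h.hasFDerivAt h2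

theorem Sm.dt_eq {f : ℝ → ℝ → ℝ} (hf : Sm f) (t x : ℝ) :
    dt1 f t x = fderiv ℝ (fun p : ℝ × ℝ => f p.1 p.2) (t, x) (1, 0) := (hf.dt_hasF t x).deriv

theorem Sm.dx_eq {f : ℝ → ℝ → ℝ} (hf : Sm f) (t x : ℝ) :
    dx1 f t x = fderiv ℝ (fun p : ℝ × ℝ => f p.1 p.2) (t, x) (0, 1) := (hf.dx_hasF t x).deriv

theorem Sm.hasDt {f : ℝ → ℝ → ℝ} (hf : Sm f) (t x : ℝ) :
    HasDerivAt (fun s => f s x) (dt1 f t x) t := by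
  rw [hf.dt_eq]; exact hf.dt_hasF t x

theorem Sm.hasDx {f : ℝ → ℝ → ℝ} (hf : Sm f) (t x : ℝ) :
    HasDerivAt (fun y => f t y) (dx1 f t x) x := by
  rw [hf.dx_eq]; exact hf.dx_hasF t x

theorem Sm.fd {f : ℝ → ℝ → ℝ} (hf : Sm f) :
    ContDiff ℝ (⊤ : ℕ∞) (fderiv ℝ (fun p : ℝ × ℝ => f p.1 p.2)) :=
  ContDiff.fderiv_right (m := (⊤ : ℕ∞)) hf (by simp)

theorem Sm.dt {f : ℝ → ℝ → ℝ} (hf : Sm f) : Sm (dt1 f) := by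
  have : (fun p : ℝ × ℝ => dt1 f p.1 p.2)
      = fun p => fderiv ℝ (fun p : ℝ × ℝ => f p.1 p.2) p (1, 0) := by
    funext p; exact hf.dt_eq p.1 p.2
  unfold Sm
  rw [this]
  exact hf.fd.clm_apply contDiff_const

theorem Sm.dx {f : ℝ → ℝ → ℝ} (hf : Sm f) : Sm (dx1 f) := by
  have : (fun p : ℝ × ℝ => dx1 f p.1 p.2)
      = fun p => fderiv ℝ (fun p : ℝ × ℝ => f p.1 p.2) p (0, 1) := by
    funext p; exact hf.dx_eq p.1 p.2
  unfold Sm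
  rw [this]
  exact hf.fd.clm_apply contDiff_const

theorem Sm.comm {f : ℝ → ℝ → ℝ} (hf : Sm f) : dt1 (dx1 f) = dx1 (dt1 f) := by
  funext t x
  have hd : DifferentiableAt ℝ (fderiv ℝ (fun p : ℝ × ℝ => f p.1 p.2)) (t, x) :=
    (hf.fd.differentiable (by simp)) _
  have e1 : (fun p : ℝ × ℝ => dx1 f p.1 p.2)
      = fun p => fderiv ℝ (fun p : ℝ × ℝ => f p.1 p.2) p (0, 1) := by
    funext p; exact hf.dx_eq p.1 p.2
  have e2 : (fun p : ℝ × ℝ => dt1 f p.1 p.2)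
      = fun p => fderiv ℝ (fun p : ℝ × ℝ => f p.1 p.2) p (1, 0) := by
    funext p; exact hf.dt_eq p.1 p.2
  rw [hf.dx.dt_eq, hf.dt.dx_eq, e1, e2, fderiv_clm_apply hd (by fun_prop),
    fderiv_clm_apply hd (by fun_prop)]
  have hs : IsSymmSndFDerivAt ℝ (fun p : ℝ × ℝ => f p.1 p.2) (t, x) :=
    ContDiffAt.isSymmSndFDerivAt (n := (⊤ : ℕ∞)) (ContDiff.contDiffAt hf)
      (by simp only [minSmoothness_of_isRCLikeNormedField]; exact WithTop.coe_le_coe.2 (le_top : (2 : ℕ∞) ≤ ⊤))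
  simpa using hs (1, 0) (0, 1)

/-- The quasilinearized `v`-equation (Step 2 of the proof of Theorem 4.6): for smooth
solutions of the reduced system `η_t + v_x = 0`,
`v_t + (1+εη)η_x - ε(1+εη)η_{xxx} + ε(v²/(1+εη))_x = 0` with `1+εη > 0`, one has
`(1/(1+εη)) v_{tt} - v_{xx} + ε v_{xxxx} + (2εv/(1+εη)) ∂_x(v_t/(1+εη)) = g`. -/
theorem quasilinear_v_1d (ε : ℝ) (hε : 0 < ε) (η v : ℝ → ℝ → ℝ)
    (hη : ContDiff ℝ (⊤ : ℕ∞) fun p : ℝ × ℝ => η p.1 p.2)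
    (hv : ContDiff ℝ (⊤ : ℕ∞) fun p : ℝ × ℝ => v p.1 p.2)
    (hpos : ∀ t x, 0 < 1 + ε * η t x)
    (heq1 : ∀ t x, dt1 η t x + dx1 v t x = 0)
    (heq2 : ∀ t x, dt1 v t x + (1 + ε * η t x) * dx1 η t x
      - ε * (1 + ε * η t x) * dx1 (dx1 (dx1 η)) t x
      + ε * dx1 (fun t x => v t x ^ 2 / (1 + ε * η t x)) t x = 0) :
    ∀ t x,
      (1 / (1 + ε * η t x)) * dt1 (dt1 v) t x - dx1 (dx1 v) t x
        + ε * dx1 (dx1 (dx1 (dx1 v))) t x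
        + (2 * ε * v t x / (1 + ε * η t x)) *
            dx1 (fun t x => dt1 v t x / (1 + ε * η t x)) t x
      = -(ε * dt1 η t x / (1 + ε * η t x)) * (dx1 η t x - ε * dx1 (dx1 (dx1 η)) t x)
        - 2 * ε * dx1 v t x * dt1 v t x / (1 + ε * η t x) ^ 2
        + ε ^ 2 / (1 + ε * η t x) *
            dx1 (fun t x => v t x ^ 2 * dt1 η t x / (1 + ε * η t x) ^ 2) t x := by
  have sη : Sm η := hη
  have sv : Sm v := hv
  have hne : ∀ t x, 1 + ε * η t x ≠ 0 := fun t x => (hpos t x).ne'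
  have sh : Sm (fun t x => 1 + ε * η t x) :=
    contDiff_const.add (contDiff_const.mul hη)
  have sQ : Sm (fun t x => v t x ^ 2 / (1 + ε * η t x)) :=
    ContDiff.div (hv.pow 2) sh (fun p => hne p.1 p.2)
  have sA : Sm (fun t x => dt1 v t x / (1 + ε * η t x)) :=
    ContDiff.div sv.dt sh (fun p => hne p.1 p.2)
  have sB : Sm (fun t x => v t x ^ 2 * dt1 η t x / (1 + ε * η t x) ^ 2) :=
    ContDiff.div (ContDiff.mul (hv.pow 2) sη.dt) (ContDiff.pow sh 2)
      (fun p => pow_ne_zero 2 (hne p.1 p.2))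
  have hdtη : dt1 η = fun t x => - dx1 v t x := by
    funext t x; linarith [heq1 t x]
  have neg : ∀ f : ℝ → ℝ → ℝ, dx1 (fun t x => - f t x) = fun t x => - dx1 f t x := by
    intro f; funext t x; simp [dx1]
  have c1 : dt1 (dx1 η) = fun t x => - dx1 (dx1 v) t x := by
    rw [sη.comm, hdtη, neg]
  have c3 : dt1 (dx1 (dx1 (dx1 η))) = fun t x => - dx1 (dx1 (dx1 (dx1 v))) t x := by
    rw [sη.dx.dx.comm, sη.dx.comm, c1, neg, neg]
  have dQ : dt1 (fun t x => v t x ^ 2 / (1 + ε * η t x)) = fun t x =>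
      2 * (v t x * (dt1 v t x / (1 + ε * η t x)))
        - ε * (v t x ^ 2 * dt1 η t x / (1 + ε * η t x) ^ 2) := by
    funext t x
    have h := ((sv.hasDt t x).fun_pow 2).fun_div (((sη.hasDt t x).const_mul ε).const_add 1) (hne t x)
    refine h.deriv.trans ?_
    have := hne t x
    push_cast
    field_simp
  intro t x
  have dxdQ := (((sv.hasDx t x).fun_mul (sA.hasDx t x)).const_mul 2).fun_sub
    ((sB.hasDx t x).const_mul ε)
  have dxdQ' : dt1 (dx1 (fun t x => v t x ^ 2 / (1 + ε * η t x))) t x =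
      2 * (dx1 v t x * (dt1 v t x / (1 + ε * η t x))
        + v t x * dx1 (fun t x => dt1 v t x / (1 + ε * η t x)) t x) -
      ε * dx1 (fun t x => v t x ^ 2 * dt1 η t x / (1 + ε * η t x) ^ 2) t x := by
    rw [sQ.comm, dQ]
    exact dxdQ.deriv
  have hh := ((sη.hasDt t x).const_mul ε).const_add 1
  have H := ((((sv.dt.hasDt t x).fun_add (hh.fun_mul (sη.dx.hasDt t x))).fun_sub
    ((hh.const_mul ε).fun_mul (sη.dx.dx.dx.hasDt t x))).fun_add
    ((sQ.dx.hasDt t x).const_mul ε))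
  have H0 := H.unique ((hasDerivAt_const t (0 : ℝ)).congr_of_eventuallyEq
    (Filter.Eventually.of_forall fun s => heq2 s x))
  rw [dxdQ', c1, c3] at H0
  have hn := hne t x
  generalize dx1 (fun t x => dt1 v t x / (1 + ε * η t x)) t x = A at *
  generalize dx1 (fun t x => v t x ^ 2 * dt1 η t x / (1 + ε * η t x) ^ 2) t x = B at *
  clear dxdQ dxdQ' H hh dQ
  have key : dt1 (dt1 v) t x = (1 + ε * η t x) * dx1 (dx1 v) t x
      - ε * (1 + ε * η t x) * dx1 (dx1 (dx1 (dx1 v))) t x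
      - ε * dt1 η t x * (dx1 η t x - ε * dx1 (dx1 (dx1 η)) t x)
      - ε * (2 * (dx1 v t x * (dt1 v t x / (1 + ε * η t x)) + v t x * A) - ε * B) := by
    linear_combination H0
  rw [key]
  field_simp
  ring
end

section
/- Let ε > 0 and let η : ℝ × ℝ² → ℝ and u : ℝ × ℝ² → ℝ² be C^∞ functions (time × space) satisfying ∂_t η + ∇·u + ε ∇·(ηu) = 0 for all (t,x). Define η̃ = η − εΔη. Then for all (t,x): ∂_t η̃ + ∇·u − εΔ(∇·u) + ε ∇·(η̃ u) = ε²·( Δ(∇·(ηu)) − ∇·((Δη)·u) ). -/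
/-- Time derivative of `f : ℝ → ℝ → ℝ → ℝ` (time, then two space variables). -/
noncomputable def dt2 (f : ℝ → ℝ → ℝ → ℝ) : ℝ → ℝ → ℝ → ℝ :=
  fun t x y => deriv (fun s => f s x y) t

/-- First space partial derivative. -/
noncomputable def dx2 (f : ℝ → ℝ → ℝ → ℝ) : ℝ → ℝ → ℝ → ℝ :=
  fun t x y => deriv (fun z => f t z y) x

/-- Second space partial derivative. -/
noncomputable def dy2 (f : ℝ → ℝ → ℝ → ℝ) : ℝ → ℝ → ℝ → ℝ :=
  fun t x y => deriv (fun z => f t x z) y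

/-- Spatial Laplacian. -/
noncomputable def lap2 (f : ℝ → ℝ → ℝ → ℝ) : ℝ → ℝ → ℝ → ℝ :=
  fun t x y => dx2 (dx2 f) t x y + dy2 (dy2 f) t x y

/-- Spatial divergence of a planar vector field `(f₁, f₂)`. -/
noncomputable def div2 (f₁ f₂ : ℝ → ℝ → ℝ → ℝ) : ℝ → ℝ → ℝ → ℝ :=
  fun t x y => dx2 f₁ t x y + dy2 f₂ t x y

def S2 (f : ℝ → ℝ → ℝ → ℝ) : Prop :=
  ContDiff ℝ (⊤ : ℕ∞) fun p : ℝ × ℝ × ℝ => f p.1 p.2.1 p.2.2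

noncomputable def D2 (v : ℝ × ℝ × ℝ) (f : ℝ → ℝ → ℝ → ℝ) : ℝ → ℝ → ℝ → ℝ :=
  fun t x y => fderiv ℝ (fun p : ℝ × ℝ × ℝ => f p.1 p.2.1 p.2.2) (t, x, y) v

theorem S2.diff {f} (h : S2 f) (p : ℝ × ℝ × ℝ) :
    DifferentiableAt ℝ (fun p : ℝ × ℝ × ℝ => f p.1 p.2.1 p.2.2) p :=
  (ContDiff.differentiable h (by simp)) p

theorem S2.D {f} (h : S2 f) (v) : S2 (D2 v f) := by
  have h1 : ContDiff ℝ (⊤ : ℕ∞) (fderiv ℝ (fun p : ℝ × ℝ × ℝ => f p.1 p.2.1 p.2.2)) :=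
    ContDiff.fderiv_right (m := (⊤ : ℕ∞)) h (by simp)
  exact h1.clm_apply contDiff_const

theorem S2.comm {f} (h : S2 f) (v w) : D2 v (D2 w f) = D2 w (D2 v f) := by
  have h1 : ContDiff ℝ (⊤ : ℕ∞) (fderiv ℝ (fun p : ℝ × ℝ × ℝ => f p.1 p.2.1 p.2.2)) :=
    ContDiff.fderiv_right (m := (⊤ : ℕ∞)) h (by simp)
  have key : ∀ (a b : ℝ × ℝ × ℝ) t x y, D2 a (D2 b f) t x y =
      fderiv ℝ (fderiv ℝ (fun p : ℝ × ℝ × ℝ => f p.1 p.2.1 p.2.2)) (t, x, y) a b := by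
    intro a b t x y
    have h2 := (h1.differentiable (by simp) (t, x, y)).hasFDerivAt.clm_apply
      (hasFDerivAt_const b (t, x, y))
    have := h2.fderiv
    change fderiv ℝ (fun p : ℝ × ℝ × ℝ =>
      fderiv ℝ (fun p : ℝ × ℝ × ℝ => f p.1 p.2.1 p.2.2) p b) (t, x, y) a = _
    rw [this]; simp
  funext t x y
  rw [key, key]
  have hs : IsSymmSndFDerivAt ℝ (fun p : ℝ × ℝ × ℝ => f p.1 p.2.1 p.2.2) (t, x, y) :=
    (ContDiff.contDiffAt h).isSymmSndFDerivAt (by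
      simp only [minSmoothness_of_isRCLikeNormedField]; exact WithTop.coe_le_coe.2 le_top)
  exact hs v w

theorem S2.dt {f} (h : S2 f) : dt2 f = D2 (1, 0, 0) f := by
  funext t x y
  have hl : HasDerivAt (fun s : ℝ => (s, x, y)) ((1, 0, 0) : ℝ × ℝ × ℝ) t :=
    (hasDerivAt_id t).prodMk ((hasDerivAt_const t x).prodMk (hasDerivAt_const t y))
  exact ((h.diff (t, x, y)).hasFDerivAt.comp_hasDerivAt t hl).deriv

theorem S2.dx {f} (h : S2 f) : dx2 f = D2 (0, 1, 0) f := by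
  funext t x y
  have hl : HasDerivAt (fun s : ℝ => (t, s, y)) ((0, 1, 0) : ℝ × ℝ × ℝ) x :=
    (hasDerivAt_const x t).prodMk ((hasDerivAt_id x).prodMk (hasDerivAt_const x y))
  exact ((h.diff (t, x, y)).hasFDerivAt.comp_hasDerivAt x hl).deriv

theorem S2.dy {f} (h : S2 f) : dy2 f = D2 (0, 0, 1) f := by
  funext t x y
  have hl : HasDerivAt (fun s : ℝ => (t, x, s)) ((0, 0, 1) : ℝ × ℝ × ℝ) y :=
    (hasDerivAt_const y t).prodMk ((hasDerivAt_const y x).prodMk (hasDerivAt_id y))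
  exact ((h.diff (t, x, y)).hasFDerivAt.comp_hasDerivAt y hl).deriv

theorem S2.add {f g} (hf : S2 f) (hg : S2 g) : S2 (fun t x y => f t x y + g t x y) :=
  ContDiff.add hf hg
theorem S2.mul {f g} (hf : S2 f) (hg : S2 g) : S2 (fun t x y => f t x y * g t x y) :=
  ContDiff.mul hf hg
theorem S2.lin {f g} (hf : S2 f) (hg : S2 g) (a b : ℝ) :
    S2 (fun t x y => a * f t x y + b * g t x y) :=
  ContDiff.add (ContDiff.mul contDiff_const hf) (ContDiff.mul contDiff_const hg)

theorem S2.Dlin {f g} (hf : S2 f) (hg : S2 g) (a b : ℝ) (v) :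
    D2 v (fun t x y => a * f t x y + b * g t x y)
      = fun t x y => a * D2 v f t x y + b * D2 v g t x y := by
  funext t x y
  have := (((hf.diff (t, x, y)).hasFDerivAt.const_mul a).add
    ((hg.diff (t, x, y)).hasFDerivAt.const_mul b)).fderiv
  exact congrArg (fun L : (ℝ × ℝ × ℝ) →L[ℝ] ℝ => L v) this

theorem S2.lap {f} (h : S2 f) : lap2 f =
    fun t x y => D2 (0,1,0) (D2 (0,1,0) f) t x y + D2 (0,0,1) (D2 (0,0,1) f) t x y := by
  unfold lap2
  rw [h.dx, h.dy, (h.D _).dx, (h.D _).dy]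

theorem S2.Slap {f} (h : S2 f) : S2 (lap2 f) := by
  rw [h.lap]; exact ((h.D _).D _).add ((h.D _).D _)

theorem S2.div {f g} (hf : S2 f) (hg : S2 g) : div2 f g =
    fun t x y => D2 (0,1,0) f t x y + D2 (0,0,1) g t x y := by
  unfold div2
  rw [hf.dx, hg.dy]

theorem S2.Sdiv {f g} (hf : S2 f) (hg : S2 g) : S2 (div2 f g) := by
  rw [hf.div hg]; exact (hf.D _).add (hg.D _)

theorem S2.laplin {f g} (hf : S2 f) (hg : S2 g) (a b : ℝ) :
    lap2 (fun t x y => a * f t x y + b * g t x y)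
      = fun t x y => a * lap2 f t x y + b * lap2 g t x y := by
  rw [(hf.lin hg a b).lap, hf.lap, hg.lap, hf.Dlin hg, hf.Dlin hg,
    (hf.D _).Dlin (hg.D _), (hf.D _).Dlin (hg.D _)]
  funext t x y; ring

theorem S2.Dadd {f g} (hf : S2 f) (hg : S2 g) (v) :
    D2 v (fun t x y => f t x y + g t x y) = fun t x y => D2 v f t x y + D2 v g t x y := by
  simpa using hf.Dlin hg 1 1 v

theorem S2.dtlap {f} (h : S2 f) : dt2 (lap2 f) = lap2 (dt2 f) := by
  rw [h.Slap.dt, h.dt, (h.D _).lap, h.lap, ((h.D _).D _).Dadd ((h.D _).D _),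
    (h.D _).comm (1,0,0), (h.D _).comm (1,0,0), h.comm (1,0,0), h.comm (1,0,0)]

/-- Equation (3.41) of the paper: if `η_t + ∇·u + ε∇·(ηu) = 0` and `η̃ = η - εΔη`, then
`η̃_t + ∇·u - εΔ(∇·u) + ε∇·(η̃u) = ε²(Δ∇·(ηu) - ∇·((Δη)u))`. -/
theorem eta_tilde_identity_2d (ε : ℝ) (hε : 0 < ε) (η u₁ u₂ : ℝ → ℝ → ℝ → ℝ)
    (hη : ContDiff ℝ (⊤ : ℕ∞) fun p : ℝ × ℝ × ℝ => η p.1 p.2.1 p.2.2)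
    (hu₁ : ContDiff ℝ (⊤ : ℕ∞) fun p : ℝ × ℝ × ℝ => u₁ p.1 p.2.1 p.2.2)
    (hu₂ : ContDiff ℝ (⊤ : ℕ∞) fun p : ℝ × ℝ × ℝ => u₂ p.1 p.2.1 p.2.2)
    (heq : ∀ t x y, dt2 η t x y + div2 u₁ u₂ t x y
      + ε * div2 (fun t x y => η t x y * u₁ t x y)
              (fun t x y => η t x y * u₂ t x y) t x y = 0) :
    ∀ t x y,
      dt2 (fun t x y => η t x y - ε * lap2 η t x y) t x y
        + div2 u₁ u₂ t x y - ε * lap2 (div2 u₁ u₂) t x y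
        + ε * div2 (fun t x y => (η t x y - ε * lap2 η t x y) * u₁ t x y)
                 (fun t x y => (η t x y - ε * lap2 η t x y) * u₂ t x y) t x y
      = ε ^ 2 * (lap2 (div2 (fun t x y => η t x y * u₁ t x y)
                           (fun t x y => η t x y * u₂ t x y)) t x y
          - div2 (fun t x y => lap2 η t x y * u₁ t x y)
                 (fun t x y => lap2 η t x y * u₂ t x y) t x y) := by
  intro t x y
  replace hη : S2 η := hη
  replace hu₁ : S2 u₁ := hu₁
  replace hu₂ : S2 u₂ := hu₂
  have hN := (hη.mul hu₁).Sdiv (hη.mul hu₂)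
  have hD := hu₁.Sdiv hu₂
  have hL := hη.Slap
  have e1 : dt2 η = fun t x y => (-1) * div2 u₁ u₂ t x y
      + (-ε) * div2 (fun t x y => η t x y * u₁ t x y)
              (fun t x y => η t x y * u₂ t x y) t x y := by
    funext t x y; linarith [heq t x y]
  have e2 : dt2 (fun t x y => η t x y - ε * lap2 η t x y) t x y
      = dt2 η t x y - ε * lap2 (dt2 η) t x y := by
    have : (fun t x y => η t x y - ε * lap2 η t x y)
        = fun t x y => 1 * η t x y + (-ε) * lap2 η t x y := by funext t x y; ring
    rw [this, (hη.lin hL _ _).dt, hη.Dlin hL, ← hη.dtlap, ← hη.dt, ← hL.dt]; ring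
  have sp : ∀ u : ℝ → ℝ → ℝ → ℝ, (fun t x y => (η t x y - ε * lap2 η t x y) * u t x y)
      = fun t x y => 1 * (η t x y * u t x y) + (-ε) * (lap2 η t x y * u t x y) := by
    intro u; funext t x y; ring
  have e3 : div2 (fun t x y => (η t x y - ε * lap2 η t x y) * u₁ t x y)
                 (fun t x y => (η t x y - ε * lap2 η t x y) * u₂ t x y) t x y
      = div2 (fun t x y => η t x y * u₁ t x y) (fun t x y => η t x y * u₂ t x y) t x y
        - ε * div2 (fun t x y => lap2 η t x y * u₁ t x y)
                 (fun t x y => lap2 η t x y * u₂ t x y) t x y := by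
    rw [sp, sp, ((hη.mul hu₁).lin (hL.mul hu₁) _ _).div ((hη.mul hu₂).lin (hL.mul hu₂) _ _),
      (hη.mul hu₁).Dlin (hL.mul hu₁), (hη.mul hu₂).Dlin (hL.mul hu₂),
      (hη.mul hu₁).div (hη.mul hu₂), (hL.mul hu₁).div (hL.mul hu₂)]
    ring
  rw [e2, e3, e1, hD.laplin hN]
  ring
end
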